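/- Let S be a numerical semigroup with multiplicity m, and let w_0 = 0, w_1, …, w_{m−1} be natural numbers with w_i ≡ i (mod m) for all i ∈ {0, …, m−1}. Then {w_0, w_1, …, w_{m−1}} = Ap(E, m) for some E ∈ I₀(S) if and only if for all i, j ∈ {0, …, m−1}, w_i + w_j(S) ≥ w_{(i+j) mod m}. -/

import Mathlib

/-!
If `E` is an ideal with Apéry set `{w i}`, comparing residues modulo `m` forces
`w i = wElt E m i`. Then `w i + wElt S m j` is an element of `E` congruent to `i + j`, hence at
least the minimal one. Conversely, the inequalities say exactly that
`E = {n | w (n % m) ≤ n}` is stable under adding elements of `S`, since each `s ∈ S` is at least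
`wElt S m s`, and the least element of this `E` in the class of `i` is `w i`.
-/

open Set Pointwise

/-- A numerical semigroup: a subset of ℕ containing 0, closed under addition,
with finite complement. -/
def IsNumSgp (S : Set ℕ) : Prop :=
  0 ∈ S ∧ (∀ a ∈ S, ∀ b ∈ S, a + b ∈ S) ∧ Sᶜ.Finite

/-- The set of ideals of `S` whose smallest element is 0. -/
def I0 (S : Set ℕ) : Set (Set ℕ) :=
  {E | 0 ∈ E ∧ E + S ⊆ E}

/-- The genus of `S`: the number of gaps. -/
noncomputable def genus (S : Set ℕ) : ℕ := Sᶜ.ncard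

/-- Pseudo-Frobenius numbers of `S`. -/
def PFset (S : Set ℕ) : Set ℕ :=
  {f | f ∉ S ∧ ∀ s ∈ S, s ≠ 0 → f + s ∈ S}

/-- The type of `S`. -/
noncomputable def typeNS (S : Set ℕ) : ℕ := (PFset S).ncard

/-- The multiplicity of `S`: its least nonzero element. -/
noncomputable def mult (S : Set ℕ) : ℕ := sInf {n | n ∈ S ∧ n ≠ 0}

/-- `wElt E m i` is the least element of `E` congruent to `i` modulo `m`. -/
noncomputable def wElt (E : Set ℕ) (m i : ℕ) : ℕ := sInf {e | e ∈ E ∧ e % m = i % m}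

/-- The Frobenius number of `S`: the largest gap. -/
noncomputable def FrobN (S : Set ℕ) : ℕ := sSup Sᶜ

/-- The multiplicity belongs to `S` and is positive; cofiniteness guarantees that the infimum
defining it is attained. -/
lemma mult_mem_pos {S : Set ℕ} (hS : IsNumSgp S) : mult S ∈ S ∧ 0 < mult S := by
  have hne : {n | n ∈ S ∧ n ≠ 0}.Nonempty := by
    obtain ⟨n, hn⟩ := (hS.2.2.union (Set.finite_singleton 0)).exists_notMem
    simp only [Set.mem_union, Set.mem_compl_iff, Set.mem_singleton_iff, not_or, not_not] at hn
    exact ⟨n, hn⟩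
  have h := Nat.sInf_mem hne
  exact ⟨h.1, Nat.pos_of_ne_zero h.2⟩

/-- A cofinite set meets every residue class modulo `m > 0`, so `wElt E m i` is an actual element
of `E` rather than the junk value of an infimum over the empty set. -/
lemma wElt_spec {E : Set ℕ} (hE : Eᶜ.Finite) {m : ℕ} (hm : 0 < m) (i : ℕ) :
    wElt E m i ∈ E ∧ wElt E m i % m = i % m := by
  have hne : {e | e ∈ E ∧ e % m = i % m}.Nonempty := by
    have hinj : Function.Injective fun k : ℕ => i + m * k := fun a b h => by
      simpa [hm.ne'] using h
    obtain ⟨k, hk⟩ := (hE.preimage hinj.injOn).exists_notMem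
    refine ⟨i + m * k, ?_, Nat.add_mul_mod_self_left i m k⟩
    simpa using hk
  exact Nat.sInf_mem hne

lemma wElt_le {E : Set ℕ} {m i e : ℕ} (he : e ∈ E) (h : e % m = i % m) : wElt E m i ≤ e :=
  Nat.sInf_le ⟨he, h⟩

theorem stmt_4 (S : Set ℕ) (hS : IsNumSgp S) (m : ℕ) (hm : m = mult S)
    (w : ℕ → ℕ) (hw0 : w 0 = 0) (hcong : ∀ i < m, w i % m = i) :
    (∃ E ∈ I0 S, w '' Set.Iio m = (fun i => wElt E m i) '' Set.Iio m) ↔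
      ∀ i < m, ∀ j < m, w ((i + j) % m) ≤ w i + wElt S m j := by
  obtain ⟨-, hpos⟩ := mult_mem_pos hS
  rw [← hm] at hpos
  constructor
  · rintro ⟨E, ⟨h0, hE⟩, hEq⟩ i hi j hj
    have hSE : S ⊆ E := fun s hs => hE ⟨0, h0, s, hs, zero_add s⟩
    have hfin : Eᶜ.Finite := hS.2.2.subset (Set.compl_subset_compl.mpr hSE)
    have hw : ∀ k < m, w k = wElt E m k := by
      intro k hk
      obtain ⟨l, hl, hlk⟩ := hEq ▸ Set.mem_image_of_mem w (Set.mem_Iio.mpr hk)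
      have hmod := (wElt_spec hfin hpos l).2
      simp only at hlk
      rw [hlk, hcong k hk, Nat.mod_eq_of_lt hl] at hmod
      rw [← hlk, hmod]
    obtain ⟨hjS, hjm⟩ := wElt_spec hS.2.2 hpos j
    rw [hw _ (Nat.mod_lt _ hpos)]
    refine wElt_le (hE ⟨w i, ?_, _, hjS, rfl⟩) ?_
    · rw [hw i hi]
      exact (wElt_spec hfin hpos i).1
    · rw [Nat.mod_mod, Nat.add_mod, hcong i hi, hjm, ← Nat.add_mod_mod]
      simp
  · intro h
    refine ⟨{n | w (n % m) ≤ n}, ⟨by simp [hw0], ?_⟩, ?_⟩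
    · rintro _ ⟨e, he, s, hs, rfl⟩
      have h1 := h (e % m) (Nat.mod_lt _ hpos) (s % m) (Nat.mod_lt _ hpos)
      have h2 : wElt S m (s % m) ≤ s := wElt_le hs (Nat.mod_mod s m).symm
      rw [← Nat.add_mod] at h1
      exact h1.trans (Nat.add_le_add he h2)
    · refine Set.image_congr fun i hi => ?_
      have hi : i < m := hi
      have hmem : w i ∈ {n | w (n % m) ≤ n} := by
        simp [hcong i hi]
      have himod : w i % m = i % m := by rw [hcong i hi, Nat.mod_eq_of_lt hi]
      refine le_antisymm (le_csInf ⟨w i, hmem, himod⟩ ?_) (wElt_le hmem himod)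
      rintro e ⟨he, hei⟩
      rw [Nat.mod_eq_of_lt hi] at hei
      rw [Set.mem_setOf_eq, hei] at he
      exact he
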